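/- arXiv:math/0110056 — 2 statements merged into one kernel-verified Lean document; each statement's English description precedes it below -/
import Mathlib

section
/- For all integers n ≥ 2 and k ≥ 1, the numbers f_{112,211}(n,k) of words in [k]^n avoiding both patterns 112 and 211 satisfy the recurrence f_{112,211}(n,k) = f_{112,211}(n,k-1) + n · f_{112,211}(n-1,k-1) + f_{112,211}(n-2,k-1) + [n ≥ 3], where [n ≥ 3] equals 1 if n ≥ 3 and 0 otherwise. -/
/-- A word `σ ∈ [k]^n` (encoded as `σ : Fin n → Fin k`) contains the pattern `τ`
(encoded as a list of natural numbers) if there is a strictly increasing choice of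
positions on which `σ` is order-isomorphic to `τ`. -/
def WordContains {n k : ℕ} (σ : Fin n → Fin k) (τ : List ℕ) : Prop :=
  ∃ f : Fin τ.length → Fin n, StrictMono f ∧
    ∀ a b : Fin τ.length,
      (σ (f a) < σ (f b) ↔ τ.get a < τ.get b) ∧
      (σ (f a) = σ (f b) ↔ τ.get a = τ.get b)

/-- `avoiders n k T` is the number of words in `[k]^n` that avoid every pattern in `T`,
i.e. `f_T(n,k)`. -/
noncomputable def avoiders (n k : ℕ) (T : Set (List ℕ)) : ℕ :=
  Nat.card {σ : Fin n → Fin k // ∀ τ ∈ T, ¬ WordContains σ τ}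

/-- Elementary form of avoiding both 112 and 211. -/
def Av {n k : ℕ} (σ : Fin n → Fin k) : Prop :=
  ∀ a b c : Fin n, a < b → b < c →
    ¬ (σ a = σ b ∧ σ b < σ c) ∧ ¬ (σ b = σ c ∧ σ c < σ a)

lemma contains112 {n k : ℕ} (σ : Fin n → Fin k) :
    WordContains σ [1, 1, 2] ↔ ∃ a b c, a < b ∧ b < c ∧ σ a = σ b ∧ σ b < σ c := by
  constructor
  · rintro ⟨f, hf, h⟩
    refine ⟨f ⟨0, by simp⟩, f ⟨1, by simp⟩, f ⟨2, by simp⟩, hf (by simp), hf (by simp), ?_, ?_⟩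
    · exact (h _ _).2.2 (by simp)
    · exact (h _ _).1.2 (by simp)
  · rintro ⟨a, b, c, hab, hbc, h1, h2⟩
    refine ⟨(![a, b, c] : Fin 3 → Fin n), ?_, ?_⟩
    · intro x y hxy
      change Fin 3 at x y
      fin_cases x <;> fin_cases y <;> simp_all <;> first | exact hab.trans hbc | exact absurd hxy (by decide)
    · intro x y
      change Fin 3 at x y
      fin_cases x <;> fin_cases y <;> simp_all <;> grind

lemma contains211 {n k : ℕ} (σ : Fin n → Fin k) :
    WordContains σ [2, 1, 1] ↔ ∃ a b c, a < b ∧ b < c ∧ σ b = σ c ∧ σ c < σ a := by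
  constructor
  · rintro ⟨f, hf, h⟩
    refine ⟨f ⟨0, by simp⟩, f ⟨1, by simp⟩, f ⟨2, by simp⟩, hf (by simp), hf (by simp), ?_, ?_⟩
    · exact (h _ _).2.2 (by simp)
    · exact (h _ _).1.2 (by simp)
  · rintro ⟨a, b, c, hab, hbc, h1, h2⟩
    refine ⟨(![a, b, c] : Fin 3 → Fin n), ?_, ?_⟩
    · intro x y hxy
      change Fin 3 at x y
      fin_cases x <;> fin_cases y <;> simp_all <;> first | exact hab.trans hbc | exact absurd hxy (by decide)
    · intro x y
      change Fin 3 at x y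
      fin_cases x <;> fin_cases y <;> simp_all <;> grind

lemma avoiders_eq (n k : ℕ) :
    avoiders n k {[1, 1, 2], [2, 1, 1]} = Nat.card {σ : Fin n → Fin k // Av σ} := by
  unfold avoiders
  refine Nat.card_congr (Equiv.subtypeEquivRight fun σ => ?_)
  simp only [Set.mem_insert_iff, Set.mem_singleton_iff, forall_eq_or_imp, forall_eq,
    contains112, contains211, Av]
  push Not
  grind

lemma Av.comp {n m k : ℕ} {σ : Fin n → Fin k} (h : Av σ) (f : Fin m → Fin n)
    (hf : StrictMono f) : Av (fun i => σ (f i)) :=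
  fun _ _ _ hab hbc => h _ _ _ (hf hab) (hf hbc)

lemma av_succ {n k : ℕ} (σ : Fin n → Fin k) : Av (fun i => (σ i).succ) ↔ Av σ := by
  simp [Av, Fin.succ_lt_succ_iff]

lemma exists_pred {n k : ℕ} (σ : Fin n → Fin (k + 1)) (h : ∀ i, σ i ≠ 0) :
    ∃ τ : Fin n → Fin k, σ = fun i => (τ i).succ :=
  ⟨fun i => (σ i).pred (h i), by simp⟩

/-- insert a single smallest letter -/
def ins {n k : ℕ} (p : Fin (n + 1)) (σ : Fin n → Fin k) : Fin (n + 1) → Fin (k + 1) :=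
  Fin.insertNth p (0 : Fin (k + 1)) (fun i => (σ i).succ)

@[simp] lemma ins_same {n k : ℕ} (p : Fin (n + 1)) (σ : Fin n → Fin k) : ins p σ p = 0 := by
  simp [ins]

@[simp] lemma ins_above {n k : ℕ} (p : Fin (n + 1)) (σ : Fin n → Fin k) (i : Fin n) :
    ins p σ (p.succAbove i) = (σ i).succ := by
  simp [ins]

lemma ins_zero_iff {n k : ℕ} (p : Fin (n + 1)) (σ : Fin n → Fin k) (i : Fin (n + 1)) :
    ins p σ i = 0 ↔ i = p := by
  rcases Fin.eq_self_or_eq_succAbove p i with h | ⟨j, rfl⟩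
  · simp [h]
  · simp [Fin.succAbove_ne]

lemma ins_av {n k : ℕ} (p : Fin (n + 1)) (σ : Fin n → Fin k) (h : Av σ) : Av (ins p σ) := by
  intro a b c hab hbc
  have hz := ins_zero_iff p σ
  have key : a ≠ p → b ≠ p → c ≠ p → ¬ (ins p σ a = ins p σ b ∧ ins p σ b < ins p σ c) ∧
      ¬ (ins p σ b = ins p σ c ∧ ins p σ c < ins p σ a) := by
    intro ha hb hc
    obtain ⟨a, rfl⟩ := Fin.exists_succAbove_eq ha
    obtain ⟨b, rfl⟩ := Fin.exists_succAbove_eq hb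
    obtain ⟨c, rfl⟩ := Fin.exists_succAbove_eq hc
    rw [Fin.succAbove_lt_succAbove_iff] at hab hbc
    simpa [Fin.succ_lt_succ_iff] using h a b c hab hbc
  have h0 : ∀ x : Fin (k + 1), ¬ x < 0 := fun x => Fin.not_lt_zero x
  constructor
  · rintro ⟨h1, h2⟩
    have hc : c ≠ p := by
      rintro rfl
      rw [ins_same] at h2
      exact h0 _ h2
    have hb : b ≠ p := fun e => hab.ne (((hz a).1 (h1.trans ((hz b).2 e))).trans e.symm)
    have ha : a ≠ p := fun e => hab.ne (e.trans ((hz b).1 (h1.symm.trans ((hz a).2 e))).symm)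
    exact (key ha hb hc).1 ⟨h1, h2⟩
  · rintro ⟨h1, h2⟩
    have ha : a ≠ p := by
      rintro rfl
      rw [ins_same] at h2
      exact h0 _ h2
    have hb : b ≠ p := fun e => hbc.ne (e.trans ((hz c).1 (h1.symm.trans ((hz b).2 e))).symm)
    have hc : c ≠ p := fun e => hbc.ne (((hz b).1 (h1.trans ((hz c).2 e))).trans e.symm)
    exact (key ha hb hc).2 ⟨h1, h2⟩

/-- surround by two smallest letters -/
def sur {m k : ℕ} (σ : Fin m → Fin k) : Fin (m + 2) → Fin (k + 1) :=
  Fin.cons (0 : Fin (k + 1)) (Fin.snoc (fun i => (σ i).succ) (0 : Fin (k + 1)) : Fin (m + 1) → Fin (k + 1))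

@[simp] lemma sur_zero {m k : ℕ} (σ : Fin m → Fin k) : sur σ 0 = 0 := by simp [sur]

@[simp] lemma sur_last {m k : ℕ} (σ : Fin m → Fin k) : sur σ (Fin.last m).succ = 0 := by
  simp [sur]

@[simp] lemma sur_mid {m k : ℕ} (σ : Fin m → Fin k) (i : Fin m) :
    sur σ i.castSucc.succ = (σ i).succ := by
  simp [sur]

lemma cases3 {m : ℕ} (i : Fin (m + 2)) :
    i = 0 ∨ i = (Fin.last m).succ ∨ ∃ j : Fin m, i = j.castSucc.succ := by
  rcases Fin.eq_zero_or_eq_succ i with h | ⟨j, rfl⟩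
  · exact Or.inl h
  · rcases Fin.eq_castSucc_or_eq_last j with ⟨l, rfl⟩ | rfl
    · exact Or.inr (Or.inr ⟨l, rfl⟩)
    · exact Or.inr (Or.inl rfl)

lemma sur_zero_iff {m k : ℕ} (σ : Fin m → Fin k) (i : Fin (m + 2)) :
    sur σ i = 0 ↔ i = 0 ∨ i = (Fin.last m).succ := by
  rcases cases3 i with h | h | ⟨j, rfl⟩
  · subst h
    rw [sur_zero]
    simp
  · subst h
    rw [sur_last]
    simp
  · simp [Fin.ext_iff]
    omega

lemma sur_av {m k : ℕ} (σ : Fin m → Fin k) (h : Av σ) : Av (sur σ) := by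
  intro a b c hab hbc
  rcases cases3 b with rfl | rfl | ⟨b, rfl⟩
  · exact absurd hab (Fin.not_lt_zero _)
  · rw [Fin.lt_def] at hbc
    simp at hbc
    omega
  rcases cases3 a with rfl | rfl | ⟨a, rfl⟩
  · simp [(Fin.succ_ne_zero _).symm]
  · rw [Fin.lt_def] at hab
    simp at hab
    omega
  rcases cases3 c with rfl | rfl | ⟨c, rfl⟩
  · exact absurd hbc (Fin.not_lt_zero _)
  · rw [sur_last]
    simp [Fin.succ_ne_zero]
  simp only [sur_mid, Fin.succ_inj, Fin.succ_lt_succ_iff]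
  exact h a b c (Fin.succ_lt_succ_iff.1 hab) (Fin.succ_lt_succ_iff.1 hbc)

/-- The decomposition map. -/
def F (m j : ℕ) :
    (({σ : Fin (m + 2) → Fin j // Av σ} ⊕ (Fin (m + 2) × {σ : Fin (m + 1) → Fin j // Av σ})) ⊕
      {σ : Fin m → Fin j // Av σ}) ⊕ {_u : Unit // 3 ≤ m + 2} →
    {σ : Fin (m + 2) → Fin (j + 1) // Av σ}
  | .inl (.inl (.inl σ)) => ⟨fun i => (σ.1 i).succ, (av_succ _).2 σ.2⟩
  | .inl (.inl (.inr (p, σ))) => ⟨ins p σ.1, ins_av _ _ σ.2⟩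
  | .inl (.inr σ) => ⟨sur σ.1, sur_av _ σ.2⟩
  | .inr _ => ⟨fun _ => 0, fun a b c _ _ => by simp⟩

lemma F_inj (m j : ℕ) : Function.Injective (F m j) := by
  have hne : (0 : Fin (m + 2)) ≠ (Fin.last m).succ := (Fin.succ_ne_zero _).symm
  rintro (((⟨σ, hσ⟩ | ⟨p, σ, hσ⟩) | ⟨σ, hσ⟩) | ⟨u, hu⟩) (((⟨τ, hτ⟩ | ⟨q, τ, hτ⟩) | ⟨τ, hτ⟩) | ⟨v, hv⟩) h <;>
    have h' := (fun i => congrFun (congrArg Subtype.val h) i) <;> simp only [F] at h'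
  · simp only [Fin.succ_inj] at h'
    obtain rfl := funext h'
    rfl
  · have := h' q
    simp at this
  · have := h' 0
    simp at this
  · have := h' 0
    simp at this
  · have := h' p
    simp [(Fin.succ_ne_zero _).symm] at this
  · have : p = q := by
      rw [← ins_zero_iff q τ, ← h', ins_same]
    subst this
    have : σ = τ := by
      funext i
      have := h' (p.succAbove i)
      simpa using this
    subst this
    rfl
  · have h1 := (ins_zero_iff p σ 0).1 (by rw [h', sur_zero])
    have h2 := (ins_zero_iff p σ _).1 (by rw [h', sur_last])
    exact absurd (h1.trans h2.symm) hne
  · have h1 := (ins_zero_iff p σ 0).1 (by rw [h'])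
    have h2 := (ins_zero_iff p σ (Fin.last m).succ).1 (by rw [h'])
    exact absurd (h1.trans h2.symm) hne
  · have := h' 0
    simp [(Fin.succ_ne_zero _).symm] at this
  · have h1 := (ins_zero_iff q τ 0).1 (by rw [← h', sur_zero])
    have h2 := (ins_zero_iff q τ _).1 (by rw [← h', sur_last])
    exact absurd (h1.trans h2.symm) hne
  · have : σ = τ := by
      funext i
      have := h' i.castSucc.succ
      simpa using this
    subst this
    rfl
  · have := h' (Fin.castSucc (⟨0, by omega⟩ : Fin m)).succ
    rw [sur_mid] at this
    exact absurd this (Fin.succ_ne_zero _)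
  · have := h' 0
    simp [(Fin.succ_ne_zero _).symm] at this
  · have h1 := (ins_zero_iff q τ 0).1 (by rw [← h'])
    have h2 := (ins_zero_iff q τ (Fin.last m).succ).1 (by rw [← h'])
    exact absurd (h1.trans h2.symm) hne
  · have := h' (Fin.castSucc (⟨0, by omega⟩ : Fin m)).succ
    rw [sur_mid] at this
    exact absurd this.symm (Fin.succ_ne_zero _)
  · rfl

lemma sur_of_zeros {m j : ℕ} (σ : Fin (m + 2) → Fin (j + 1)) (hσ : Av σ)
    (h : ∀ i, σ i = 0 ↔ i = 0 ∨ i = (Fin.last m).succ) :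
    ∃ τ : Fin m → Fin j, Av τ ∧ sur τ = σ := by
  obtain ⟨τ, hτ⟩ := exists_pred (fun i : Fin m => σ i.castSucc.succ) (by
    intro i hi
    rw [h] at hi
    simp [Fin.ext_iff] at hi
    omega)
  refine ⟨τ, ?_, ?_⟩
  · rw [← av_succ, ← hτ]
    exact hσ.comp (fun i : Fin m => i.castSucc.succ) (fun a b hab => Fin.succ_lt_succ_iff.2 hab)
  · funext i
    rcases cases3 i with rfl | rfl | ⟨i, rfl⟩
    · simp [(h 0).2 (Or.inl rfl)]
    · rw [sur_last, (h _).2 (Or.inr rfl)]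
    · rw [sur_mid]
      exact (congrFun hτ i).symm

lemma F_surj (m j : ℕ) : Function.Surjective (F m j) := by
  rintro ⟨σ, hσ⟩
  have pos : ∀ x : Fin (j + 1), x ≠ 0 → 0 < x := fun x hx => Fin.pos_of_ne_zero hx
  by_cases h0 : ∀ i, σ i ≠ 0
  · obtain ⟨τ, rfl⟩ := exists_pred σ h0
    exact ⟨.inl (.inl (.inl ⟨τ, (av_succ _).1 hσ⟩)), rfl⟩
  push Not at h0
  obtain ⟨p, hp⟩ := h0
  by_cases h1 : ∀ i, σ i = 0 → i = p
  · obtain ⟨τ, hτ⟩ := exists_pred (fun i => σ (p.succAbove i))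
      (fun i hi => Fin.succAbove_ne p i (h1 _ hi))
    refine ⟨.inl (.inl (.inr (p, ⟨τ, ?_⟩))), ?_⟩
    · rw [← av_succ, ← hτ]
      exact hσ.comp _ (Fin.strictMono_succAbove p)
    · simp only [F, Subtype.mk.injEq]
      funext i
      rcases Fin.eq_self_or_eq_succAbove p i with rfl | ⟨l, rfl⟩
      · simp [hp]
      · rw [ins_above]
        exact (congrFun hτ l).symm
  have two : ∃ a b, a < b ∧ σ a = 0 ∧ σ b = 0 := by
    push Not at h1
    obtain ⟨q, hq, hqp⟩ := h1
    rcases lt_or_gt_of_ne hqp with h | h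
    · exact ⟨q, p, h, hq, hp⟩
    · exact ⟨p, q, h, hp, hq⟩
  obtain ⟨a, b, hab, ha, hb⟩ := two
  -- facts about avoidance of zeros
  have A : ∀ x y c, x < y → σ x = 0 → σ y = 0 → y < c → σ c = 0 := by
    intro x y c hxy hx hy hc
    by_contra hne
    exact (hσ x y c hxy hc).1 ⟨hx.trans hy.symm, hy ▸ pos _ hne⟩
  have B : ∀ x y c, x < y → σ x = 0 → σ y = 0 → c < x → σ c = 0 := by
    intro x y c hxy hx hy hc
    by_contra hne
    exact (hσ c x y hc hxy).2 ⟨hx.trans hy.symm, hy ▸ pos _ hne⟩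
  have z0 : σ 0 = 0 := by
    rcases Fin.eq_zero_or_eq_succ a with rfl | ⟨l, rfl⟩
    · exact ha
    · exact B _ b 0 hab ha hb (Fin.succ_pos l)
  have zl : σ (Fin.last m).succ = 0 := by
    rcases (Fin.le_last b).lt_or_eq with h | h
    · exact A a b _ hab ha hb (by simpa using h)
    · rw [Fin.succ_last, ← h]
      exact hb
  by_cases hall : ∀ i, σ i = 0
  · by_cases hm : 3 ≤ m + 2
    · refine ⟨.inr ⟨(), hm⟩, ?_⟩
      apply Subtype.ext
      funext i
      exact (hall i).symm
    · obtain ⟨τ, h1, h2⟩ := sur_of_zeros σ hσ (fun i => by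
        simp only [hall, true_iff, Fin.ext_iff, Fin.val_succ, Fin.val_last, Fin.val_zero]
        have := i.2
        omega)
      exact ⟨.inl (.inr ⟨τ, h1⟩), Subtype.ext h2⟩
  · push Not at hall
    obtain ⟨c, hc⟩ := hall
    obtain ⟨τ, h1, h2⟩ := sur_of_zeros σ hσ (fun i => by
      refine ⟨fun hi => ?_, ?_⟩
      · by_contra hcon
        push Not at hcon
        obtain ⟨n1, n2⟩ := hcon
        have i0 : 0 < i := Fin.pos_of_ne_zero n1
        have il : i < (Fin.last m).succ := by
          rw [Fin.succ_last] at n2 ⊢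
          exact Fin.lt_last_iff_ne_last.2 n2
        rcases lt_trichotomy c i with h | h | h
        · exact hc (B i _ c il hi zl h)
        · exact hc (h ▸ hi)
        · exact hc (A 0 i c i0 z0 hi h)
      · rintro (rfl | rfl)
        · exact z0
        · exact zl)
    exact ⟨.inl (.inr ⟨τ, h1⟩), Subtype.ext h2⟩

/-- f_{112,211}(n,k) = f_{112,211}(n,k-1) + n·f_{112,211}(n-1,k-1) + f_{112,211}(n-2,k-1)
+ [n ≥ 3], for n ≥ 2, k ≥ 1. -/
theorem avoid_112_211_recurrence (n k : ℕ) (hn : 2 ≤ n) (hk : 1 ≤ k) :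
    avoiders n k {[1, 1, 2], [2, 1, 1]} =
      avoiders n (k - 1) {[1, 1, 2], [2, 1, 1]} +
        n * avoiders (n - 1) (k - 1) {[1, 1, 2], [2, 1, 1]} +
        avoiders (n - 2) (k - 1) {[1, 1, 2], [2, 1, 1]} +
        (if 3 ≤ n then 1 else 0) := by
  obtain ⟨m, rfl⟩ := Nat.exists_eq_add_of_le' hn
  obtain ⟨j, rfl⟩ := Nat.exists_eq_add_of_le' hk
  have e1 : m + 2 - 1 = m + 1 := rfl
  simp only [avoiders_eq, Nat.add_sub_cancel, e1]
  rw [← Nat.card_eq_of_bijective (F m j) ⟨F_inj m j, F_surj m j⟩]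
  rw [Nat.card_sum, Nat.card_sum, Nat.card_sum, Nat.card_prod, Nat.card_fin]
  congr 1
  split_ifs with h
  · simp [h]
  · simp [h]
end

section
/- For the number f_{112,221}(n,k) of words in [k]^n avoiding both patterns 112 and 221: if n ≥ k+1 and k ≥ 1 then f_{112,221}(n,k) = ∑_{j=1}^{k} j · j! · C(k,j); and if k ≥ n ≥ 2 then f_{112,221}(n,k) = n! · C(k,n) + ∑_{j=1}^{n-1} j · j! · C(k,j). -/
/-- Avoiding 112 and 221: after a repeated letter, only that letter occurs. -/
def GoodWord {n k : ℕ} (σ : Fin n → Fin k) : Prop :=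
  ∀ a b c : Fin n, a < b → b < c → σ a = σ b → σ c = σ a

theorem goodWord_iff {n k : ℕ} (σ : Fin n → Fin k) :
    (∀ τ ∈ ({[1, 1, 2], [2, 2, 1]} : Set (List ℕ)), ¬ WordContains σ τ) ↔ GoodWord σ := by
  constructor
  · intro h a b c hab hbc e
    by_contra hne
    have hm : StrictMono (![a, b, c] : Fin 3 → Fin n) := by
      intro i j hij
      fin_cases i <;> fin_cases j <;> simp_all
      exact hab.trans hbc
    rcases lt_or_gt_of_ne hne with hlt | hlt
    · refine h [2, 2, 1] (by simp) ⟨(![a, b, c] : Fin 3 → Fin n), hm, ?_⟩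
      intro i j
      change Fin 3 at i j
      have h1 := hlt.ne
      have h2 := hlt.ne'
      have h3 := hlt.le
      fin_cases i <;> fin_cases j <;> simp_all
    · refine h [1, 1, 2] (by simp) ⟨(![a, b, c] : Fin 3 → Fin n), hm, ?_⟩
      intro i j
      change Fin 3 at i j
      have h1 := hlt.ne
      have h2 := hlt.ne'
      have h3 := hlt.le
      fin_cases i <;> fin_cases j <;> simp_all
  · intro h τ hτ
    rcases hτ with rfl | rfl
    · rintro ⟨f, hf, H⟩
      have e : σ (f (0 : Fin 3)) = σ (f (1 : Fin 3)) := (H (0 : Fin 3) (1 : Fin 3)).2.2 rfl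
      have e2 := h _ _ (f (2 : Fin 3)) (hf (show (0 : Fin 3) < 1 by decide))
        (hf (show (1 : Fin 3) < 2 by decide)) e
      have := (H (2 : Fin 3) (0 : Fin 3)).2.1 e2
      revert this
      decide
    · rintro ⟨f, hf, H⟩
      have e : σ (f (0 : Fin 3)) = σ (f (1 : Fin 3)) := (H (0 : Fin 3) (1 : Fin 3)).2.2 rfl
      have e2 := h _ _ (f (2 : Fin 3)) (hf (show (0 : Fin 3) < 1 by decide))
        (hf (show (1 : Fin 3) < 2 by decide)) e
      have := (H (2 : Fin 3) (0 : Fin 3)).2.1 e2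
      revert this
      decide

theorem goodWord_of_injective {n k : ℕ} {σ : Fin n → Fin k} (h : Function.Injective σ) :
    GoodWord σ := by
  intro a b c hab _ e
  exact absurd (h e) hab.ne

theorem goodWord_snoc {n k : ℕ} (p : Fin n → Fin k) (x : Fin k) :
    GoodWord (Fin.snoc p x : Fin (n + 1) → Fin k) ↔
      GoodWord p ∧ ∀ a b : Fin n, a < b → p a = p b → x = p a := by
  constructor
  · intro h
    refine ⟨fun a b c hab hbc e => ?_, fun a b hab e => ?_⟩
    · have := h a.castSucc b.castSucc c.castSucc hab hbc
      simp only [Fin.snoc_castSucc] at this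
      exact this e
    · have := h a.castSucc b.castSucc (Fin.last n) hab (Fin.castSucc_lt_last b)
      simp only [Fin.snoc_castSucc, Fin.snoc_last] at this
      exact this e
  · rintro ⟨h, hx⟩ a b c hab hbc
    obtain ⟨b, rfl⟩ := Fin.exists_castSucc_eq.2 (ne_of_lt (hbc.trans_le (Fin.le_last c)))
    obtain ⟨a, rfl⟩ := Fin.exists_castSucc_eq.2
      (ne_of_lt (hab.trans_le (Fin.le_last _)))
    induction c using Fin.lastCases with
    | last =>
      simp only [Fin.snoc_castSucc, Fin.snoc_last]
      exact hx a b hab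
    | cast c =>
      simp only [Fin.snoc_castSucc]
      exact h a b c hab hbc

open Classical in
/-- Number of good words with a repeated letter. -/
noncomputable def badCount (n k : ℕ) : ℕ :=
  (Finset.univ.filter fun σ : Fin n → Fin k => GoodWord σ ∧ ¬ Function.Injective σ).card

open Classical in
theorem card_inj (n k : ℕ) :
    (Finset.univ.filter fun σ : Fin n → Fin k => Function.Injective σ).card
      = k.descFactorial n := by
  rw [← Fintype.card_subtype, Fintype.card_congr (Equiv.subtypeInjectiveEquivEmbedding _ _),
    Fintype.card_embedding_eq]
  simp

open Classical in
theorem fiber_card {n k : ℕ} (p : Fin n → Fin k) :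
    (Finset.univ.filter fun x : Fin k => GoodWord (Fin.snoc p x : Fin (n + 1) → Fin k) ∧
      ¬ Function.Injective (Fin.snoc p x : Fin (n + 1) → Fin k)).card =
    (if Function.Injective p then n else 0) +
      (if GoodWord p ∧ ¬ Function.Injective p then 1 else 0) := by
  simp only [goodWord_snoc, Fin.snoc_injective_iff]
  by_cases hp : Function.Injective p
  · have : (Finset.univ.filter fun x : Fin k =>
        (GoodWord p ∧ ∀ a b : Fin n, a < b → p a = p b → x = p a) ∧
        ¬ (Function.Injective p ∧ x ∉ Set.range p)) = Finset.univ.image p := by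
      ext x
      simp only [Finset.mem_filter, Finset.mem_univ, true_and, Finset.mem_image]
      constructor
      · rintro ⟨_, h⟩
        by_contra hc
        exact h ⟨hp, hc⟩
      · rintro ⟨i, rfl⟩
        exact ⟨⟨goodWord_of_injective hp, fun a b hab e => absurd (hp e) hab.ne⟩,
          fun h => h.2 ⟨i, rfl⟩⟩
    rw [this, Finset.card_image_of_injective _ hp]
    simp [hp]
  · by_cases hg : GoodWord p
    · obtain ⟨a, b, hab, e⟩ : ∃ a b : Fin n, a < b ∧ p a = p b := by
        by_contra hc
        push Not at hc
        apply hp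
        intro a b e
        rcases lt_trichotomy a b with h | h | h
        · exact absurd e (hc a b h)
        · exact h
        · exact absurd e.symm (hc b a h)
      have : (Finset.univ.filter fun x : Fin k =>
          (GoodWord p ∧ ∀ a b : Fin n, a < b → p a = p b → x = p a) ∧
          ¬ (Function.Injective p ∧ x ∉ Set.range p)) = {p a} := by
        ext x
        simp only [Finset.mem_filter, Finset.mem_univ, true_and, Finset.mem_singleton]
        constructor
        · rintro ⟨h, _⟩
          exact h.2 a b hab e
        · rintro rfl
          refine ⟨⟨hg, fun a' b' hab' e' => ?_⟩, fun h => hp h.1⟩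
          rcases lt_trichotomy b b' with h | h | h
          · rw [e', hg a b b' hab h e]
          · rw [e', e, h]
          · rw [e, hg a' b' b hab' h e']
      rw [this]
      simp [hp, hg]
    · simp [hp, hg]

open Classical in
theorem badCount_succ (n k : ℕ) :
    badCount (n + 1) k = badCount n k + n * k.descFactorial n := by
  have h1 : badCount (n + 1) k = ∑ p : Fin n → Fin k,
      (Finset.univ.filter fun x : Fin k => GoodWord (Fin.snoc p x : Fin (n + 1) → Fin k) ∧
        ¬ Function.Injective (Fin.snoc p x : Fin (n + 1) → Fin k)).card := by
    unfold badCount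
    simp only [Finset.card_filter]
    rw [← (Fin.snocEquiv (fun _ : Fin (n + 1) => Fin k)).sum_comp, Fintype.sum_prod_type_right]
    rfl
  rw [h1]
  simp only [fiber_card]
  rw [Finset.sum_add_distrib, ← Finset.card_filter, ← Finset.sum_filter, Finset.sum_const,
    card_inj, badCount, smul_eq_mul]
  ring

theorem badCount_eq (n k : ℕ) :
    badCount (n + 1) k = ∑ j ∈ Finset.Icc 1 n, j * j.factorial * k.choose j := by
  induction n with
  | zero =>
    rw [badCount_succ]
    simp [badCount, Function.injective_of_subsingleton]
  | succ n ih =>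
    rw [badCount_succ, ih, Finset.sum_Icc_succ_top (by omega),
      Nat.descFactorial_eq_factorial_mul_choose, mul_assoc]

open Classical in
theorem avoiders_eq_s14 (n k : ℕ) :
    avoiders n k {[1, 1, 2], [2, 2, 1]} = n.factorial * k.choose n + badCount n k := by
  unfold avoiders
  simp only [goodWord_iff]
  rw [Nat.card_eq_fintype_card, Fintype.card_subtype, ← Nat.descFactorial_eq_factorial_mul_choose,
    ← card_inj, badCount,
    ← Finset.card_filter_add_card_filter_not (fun σ : Fin n → Fin k => Function.Injective σ),
    Finset.filter_filter, Finset.filter_filter]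
  congr 2
  ext σ
  simp only [Finset.mem_filter, Finset.mem_univ, true_and]
  exact ⟨fun h => h.2, fun h => ⟨goodWord_of_injective h, h⟩⟩

/-- f_{112,221}(n,k) = ∑_{j=1}^{k} j·j!·C(k,j) for n ≥ k+1, k ≥ 1; and
f_{112,221}(n,k) = n!·C(k,n) + ∑_{j=1}^{n-1} j·j!·C(k,j) for k ≥ n ≥ 2. -/
theorem avoid_112_221_count (n k : ℕ) :
    (k + 1 ≤ n → 1 ≤ k →
      avoiders n k {[1, 1, 2], [2, 2, 1]} =
        ∑ j ∈ Finset.Icc 1 k, j * j.factorial * k.choose j) ∧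
    (2 ≤ n → n ≤ k →
      avoiders n k {[1, 1, 2], [2, 2, 1]} =
        n.factorial * k.choose n + ∑ j ∈ Finset.Icc 1 (n - 1), j * j.factorial * k.choose j) := by
  rw [avoiders_eq_s14]
  constructor
  · intro h _
    obtain ⟨m, rfl⟩ : ∃ m, n = m + 1 := ⟨n - 1, by omega⟩
    rw [badCount_eq, Nat.choose_eq_zero_of_lt (by omega), mul_zero, zero_add]
    symm
    apply Finset.sum_subset (Finset.Icc_subset_Icc_right (by omega))
    intro j hj hj'
    rw [Finset.mem_Icc] at hj hj'
    rw [Nat.choose_eq_zero_of_lt (by omega), mul_zero]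
  · intro h _
    obtain ⟨m, rfl⟩ : ∃ m, n = m + 1 := ⟨n - 1, by omega⟩
    rw [badCount_eq, Nat.add_sub_cancel]
end
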